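/- Let L ∈ ℝ^{n×n} be symmetric with eigendecomposition L = QΛQᵀ, where Q is orthogonal and Λ is diagonal with nonnegative diagonal entries λ₁ ≤ … ≤ λ_n in nondecreasing order. Then for every U ∈ ℝ^{p×n} and every 1 ≤ k < n, tr(U L Uᵀ) ≥ λ_{k+1} · ‖U Q̄_k‖_F², where Q̄_k denotes the matrix of the last n−k columns of Q. -/

import Mathlib

/-! Put `V = U * Q`. Then `tr (U L Uᵀ) = tr (V Λ Vᵀ) = ∑ᵢ ∑ⱼ λⱼ Vᵢⱼ²`, a sum of nonnegative terms.
Dropping the columns `j < k` and bounding `λⱼ ≥ λₖ` (indices from `0`) on the remaining ones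
leaves `λₖ` times the squared Frobenius norm of the last `n - k` columns of `V`. -/

open Matrix BigOperators

/-- Squared Frobenius norm of a real matrix. -/
noncomputable def frobSq {m n : ℕ} (A : Matrix (Fin m) (Fin n) ℝ) : ℝ :=
  ∑ i, ∑ j, (A i j) ^ 2

theorem trace_mul_diagonal_mul_transpose {p n : ℕ} (V : Matrix (Fin p) (Fin n) ℝ)
    (lam : Fin n → ℝ) :
    Matrix.trace (V * Matrix.diagonal lam * Vᵀ) = ∑ i, ∑ j, lam j * V i j ^ 2 := by
  simp only [Matrix.trace, Matrix.diag_apply, Matrix.mul_apply (N := Vᵀ),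
    Matrix.mul_diagonal, Matrix.transpose_apply]
  refine Finset.sum_congr rfl fun i _ => Finset.sum_congr rfl fun j _ => ?_
  ring

theorem trace_lower_bound_sample_graph {p n : ℕ}
    (L : Matrix (Fin n) (Fin n) ℝ) (Q : Matrix (Fin n) (Fin n) ℝ) (lam : Fin n → ℝ)
    (hQ₁ : Qᵀ * Q = 1) (hQ₂ : Q * Qᵀ = 1)
    (hlam_nonneg : ∀ i, 0 ≤ lam i) (hlam_mono : Monotone lam)
    (hL : L = Q * Matrix.diagonal lam * Qᵀ)
    (U : Matrix (Fin p) (Fin n) ℝ) (k : ℕ) (hk1 : 1 ≤ k) (hkn : k < n) :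
    lam ⟨k, hkn⟩ *
      frobSq (U * Matrix.of fun (i : Fin n) (j : Fin (n - k)) => Q i ⟨k + j, by omega⟩)
      ≤ Matrix.trace (U * L * Uᵀ) := by
  have htr : U * L * Uᵀ = (U * Q) * Matrix.diagonal lam * (U * Q)ᵀ := by
    rw [hL, Matrix.transpose_mul]
    simp only [Matrix.mul_assoc]
  rw [htr, trace_mul_diagonal_mul_transpose, frobSq, Finset.mul_sum]
  refine Finset.sum_le_sum fun i _ => ?_
  -- The inclusion of the last `n - k` column indices.
  let e : Fin (n - k) → Fin n := fun j => ⟨k + j, by omega⟩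
  have he : Function.Injective e := fun a b h => by
    have h' : k + (a : ℕ) = k + b := congrArg Fin.val h
    exact Fin.ext (by omega)
  calc _ = lam ⟨k, hkn⟩ * ∑ j, (U * Q) i (e j) ^ 2 := rfl
    _ ≤ ∑ j, lam (e j) * (U * Q) i (e j) ^ 2 := by
      rw [Finset.mul_sum]
      refine Finset.sum_le_sum fun j _ => mul_le_mul_of_nonneg_right (hlam_mono ?_) (sq_nonneg _)
      exact Fin.mk_le_mk.2 (Nat.le_add_right _ _)
    _ = ∑ j ∈ Finset.univ.map ⟨e, he⟩, lam j * (U * Q) i j ^ 2 := by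
      rw [Finset.sum_map]; rfl
    _ ≤ ∑ j, lam j * (U * Q) i j ^ 2 :=
      Finset.sum_le_sum_of_subset_of_nonneg (Finset.subset_univ _)
        fun j _ _ => mul_nonneg (hlam_nonneg j) (sq_nonneg _)
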